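/- A symmetric bilinear form B on 𝔤 = sp(2,ℝ) satisfies (i) B(x,y) = 0 whenever x ∈ span(f₈,f₉,f₁₀), and (ii) B([z,x],y) + B(x,[z,y]) = 0 for all z ∈ span(f₈,f₉,f₁₀) and all x,y ∈ 𝔤, if and only if there exist real constants g₃₃, g₄₄, g₅₅, g₂₆ such that B = g₃₃((f³)² − 2f¹⊙f⁶) + g₄₄(f⁴)² + g₅₅((f⁵)² + 2f²⊙f⁷) + 2g₂₆(−2f³⊙f⁵ + f²⊙f⁶ − 4f¹⊙f⁷). In particular, the space of such forms is 4-dimensional. -/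

import Mathlib

/-!
STATEMENT 16 (Proposition 5 of the paper): a symmetric bilinear form B on 𝔤 = sp(2,ℝ)
vanishes on span(f₈,f₉,f₁₀) and is infinitesimally invariant along it iff it is of the
form g₃₃((f³)² − 2f¹⊙f⁶) + g₄₄(f⁴)² + g₅₅((f⁵)² + 2f²⊙f⁷)
+ 2g₂₆(−2f³⊙f⁵ + f²⊙f⁶ − 4f¹⊙f⁷); the space of such forms is 4-dimensional.
Here f₁=E₁, f₂=E₃, f₃=E₄, f₄=E₆−E₅, f₅=E₇, f₆=E₈, f₇=E₁₀, f₈=E₂, f₉=E₅+E₆, f₁₀=E₉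
(0-based `fSp i` = f_{i+1}), `ε` is the dual basis (f^I), and α⊙β is the symmetric
product.
-/

noncomputable section
open Matrix
attribute [local instance 100] LieRing.ofAssociativeRing

/-- The matrix `J` defining `sp(2,ℝ)`. -/
def Jm : Matrix (Fin 4) (Fin 4) ℝ :=
  !![0, 0, 0, 1;
     0, 0, 1, 0;
     0, -1, 0, 0;
     -1, 0, 0, 0]

/-- The general element `E(a₁,…,a₁₀)` of `sp(2,ℝ)` (indices shifted: `a i` is `a_{i+1}`). -/
def Emat (a : Fin 10 → ℝ) : Matrix (Fin 4) (Fin 4) ℝ :=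
  !![a 4, a 6, a 8, 2 * a 9;
     -(a 3), a 5, a 7, a 8;
     a 1, a 2, -(a 5), -(a 6);
     -(2 * a 0), a 1, a 3, -(a 4)]

/-- The basis `E_{i+1} = E(0,…,1,…,0)` of `sp(2,ℝ)`. -/
def E (i : Fin 10) : Matrix (Fin 4) (Fin 4) ℝ := Emat (Pi.single i 1)

set_option maxHeartbeats 1000000 in
lemma Emat_rel (a : Fin 10 → ℝ) : (Emat a)ᵀ * Jm + Jm * Emat a = 0 := by
  rw [Emat, Jm]
  ext i j
  fin_cases i <;> fin_cases j <;>
    simp [Matrix.mul_apply, Fin.sum_univ_four, Matrix.transpose_apply,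
      Matrix.vecHead, Matrix.vecTail]

/-- `sp(2,ℝ)` as a Lie subalgebra of `gl(4,ℝ)` (with the commutator bracket). -/
def sp2 : LieSubalgebra ℝ (Matrix (Fin 4) (Fin 4) ℝ) where
  carrier := {X | Xᵀ * Jm + Jm * X = 0}
  zero_mem' := by simp
  add_mem' := by
    intro x y hx hy
    simp only [Set.mem_setOf_eq] at *
    rw [transpose_add, add_mul, mul_add]
    calc xᵀ * Jm + yᵀ * Jm + (Jm * x + Jm * y)
        = (xᵀ * Jm + Jm * x) + (yᵀ * Jm + Jm * y) := by abel
      _ = 0 := by rw [hx, hy, add_zero]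
  smul_mem' := by
    intro c x hx
    simp only [Set.mem_setOf_eq] at *
    rw [transpose_smul, smul_mul_assoc, mul_smul_comm, ← smul_add, hx, smul_zero]
  lie_mem' := by
    intro x y hx hy
    simp only [Set.mem_setOf_eq] at *
    have hx' : xᵀ * Jm = -(Jm * x) := eq_neg_of_add_eq_zero_left hx
    have hy' : yᵀ * Jm = -(Jm * y) := eq_neg_of_add_eq_zero_left hy
    have h1 : yᵀ * xᵀ * Jm = Jm * (y * x) := by
      rw [mul_assoc, hx', mul_neg, ← mul_assoc, hy', neg_mul, neg_neg, mul_assoc]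
    have h2 : xᵀ * yᵀ * Jm = Jm * (x * y) := by
      rw [mul_assoc, hy', mul_neg, ← mul_assoc, hx', neg_mul, neg_neg, mul_assoc]
    rw [Ring.lie_def, transpose_sub, transpose_mul, transpose_mul, sub_mul, mul_sub, h1, h2]
    abel

lemma E_mem (i : Fin 10) : E i ∈ sp2 := Emat_rel _

/-- The basis vectors `E_I` as elements of `sp(2,ℝ)`. -/
def Esp (i : Fin 10) : sp2 := ⟨E i, E_mem i⟩

/-- The basis (f_I) (0-based) of sp(2,ℝ). -/
def fSp : Fin 10 → sp2 :=
  ![Esp 0, Esp 2, Esp 3, Esp 5 - Esp 4, Esp 6, Esp 7, Esp 9, Esp 1, Esp 4 + Esp 5, Esp 8]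

/-- The symmetric product of two 1-forms, evaluated on a pair of vectors:
(α⊙β)(X,Y) = (α(X)β(Y) + α(Y)β(X))/2. -/
def sprod (α β : sp2 →ₗ[ℝ] ℝ) (X Y : sp2) : ℝ := (α X * β Y + α Y * β X) / 2

/-- span(f₈,f₉,f₁₀) = span(E₂, E₅+E₆, E₉), i.e. sl(2,ℝ)_s, inside the matrices. -/
def spanS : Submodule ℝ (Matrix (Fin 4) (Fin 4) ℝ) :=
  Submodule.span ℝ {E 1, E 4 + E 5, E 8}

/-!
Since `ad f₉` is diagonal in the frame `(f_I)`, invariance along `f₉` kills every component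
`B(f_i, f_j)` whose weights do not cancel. Invariance along `f₁₀` then expresses all remaining
horizontal components through `g₃₃`, `g₄₄`, `g₅₅` and `g₂₆`, so a basic form is determined by these
four numbers. Conversely, the four explicit forms are basic, and each of them has exactly one of the
four components equal to `1` and the others equal to `0`.
-/

section General

variable {R L M : Type*} [CommRing R] [LieRing L]

lemma apply_eq_zero_of_weight_add_ne_zero [NoZeroDivisors R] [AddCommGroup M] [Module R M]
    [LieRingModule L M] {B : M →ₗ[R] M →ₗ[R] R} {z : L} {x y : M} {a b : R}
    (hB : B ⁅z, x⁆ y + B x ⁅z, y⁆ = 0) (hx : ⁅z, x⁆ = a • x) (hy : ⁅z, y⁆ = b • y)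
    (hab : a + b ≠ 0) : B x y = 0 := by
  simp only [hx, hy, map_smul, LinearMap.smul_apply, smul_eq_mul, ← add_mul] at hB
  exact (mul_eq_zero.mp hB).resolve_left hab

variable [LieAlgebra R L]

/-- The symmetric bilinear forms on a Lie algebra which are horizontal and infinitesimally
invariant with respect to a subspace `S`. If `S` is the Lie algebra of a subgroup `H` of `G`, these
are the left-invariant symmetric tensors on `G` whose Lie derivative along `S` vanishes and which
therefore descend to `G / H`. -/
def basicForms (S : Submodule R L) : Submodule R (L →ₗ[R] L →ₗ[R] R) where
  carrier := {B | (∀ x y, B x y = B y x) ∧ (∀ x y, x ∈ S → B x y = 0) ∧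
    ∀ z x y, z ∈ S → B ⁅z, x⁆ y + B x ⁅z, y⁆ = 0}
  zero_mem' := by simp
  add_mem' := by
    rintro B C ⟨hBs, hBv, hBi⟩ ⟨hCs, hCv, hCi⟩
    refine ⟨fun x y ↦ ?_, fun x y hx ↦ ?_, fun z x y hz ↦ ?_⟩
    · simp only [LinearMap.add_apply, hBs x y, hCs x y]
    · simp only [LinearMap.add_apply, hBv x y hx, hCv x y hx, add_zero]
    · simp only [LinearMap.add_apply]
      linear_combination hBi z x y hz + hCi z x y hz
  smul_mem' := by
    rintro c B ⟨hBs, hBv, hBi⟩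
    refine ⟨fun x y ↦ ?_, fun x y hx ↦ ?_, fun z x y hz ↦ ?_⟩
    · simp only [LinearMap.smul_apply, hBs x y]
    · simp only [LinearMap.smul_apply, hBv x y hx, smul_zero]
    · simp only [LinearMap.smul_apply, ← smul_add, hBi z x y hz, smul_zero]

lemma mem_basicForms_span {s : Set L} {B : L →ₗ[R] L →ₗ[R] R} (symm : ∀ x y, B x y = B y x)
    (horizontal : ∀ x ∈ s, ∀ y, B x y = 0)
    (invariant : ∀ z ∈ s, ∀ x y, B ⁅z, x⁆ y + B x ⁅z, y⁆ = 0) :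
    B ∈ basicForms (Submodule.span R s) := by
  refine ⟨symm, fun x y hx ↦ ?_, fun z x y hz ↦ ?_⟩
  · induction hx using Submodule.span_induction with
    | mem x hx => exact horizontal x hx y
    | zero => simp
    | add u v _ _ hu hv => simp [hu, hv]
    | smul c u _ hu => simp [hu]
  · induction hz using Submodule.span_induction with
    | mem z hz => exact invariant z hz x y
    | zero => simp
    | add u v _ _ hu hv =>
      simp only [add_lie, map_add, LinearMap.add_apply]
      linear_combination hu + hv
    | smul c u _ hu =>
      simp only [smul_lie, map_smul, LinearMap.smul_apply, ← smul_add, hu, smul_zero]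

end General

/-- The symmetric product `α ⊙ β` of two 1-forms on `sp(2,ℝ)`, bundled as a bilinear form; its
values are those of `sprod`. -/
def sprodForm (α β : sp2 →ₗ[ℝ] ℝ) : sp2 →ₗ[ℝ] sp2 →ₗ[ℝ] ℝ :=
  (2⁻¹ : ℝ) • (α.smulRight β + β.smulRight α)

lemma sprodForm_apply (α β : sp2 →ₗ[ℝ] ℝ) (X Y : sp2) : sprodForm α β X Y = sprod α β X Y := by
  simp only [sprodForm, sprod, LinearMap.smul_apply, LinearMap.add_apply,
    LinearMap.smulRight_apply, smul_eq_mul]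
  ring

lemma Emat_entries_of_mem_sp2 {X : Matrix (Fin 4) (Fin 4) ℝ} (hX : X ∈ sp2) :
    Emat ![-(X 3 0) / 2, X 2 0, X 2 1, -(X 1 0), X 0 0, X 1 1, X 0 1, X 1 2, X 0 2, X 0 3 / 2] =
      X := by
  have entry (i j : Fin 4) : (Xᵀ * Jm + Jm * X) i j = 0 := congrFun (congrFun hX i) j
  simp only [Jm, Matrix.add_apply, Matrix.mul_apply, Fin.sum_univ_four] at entry
  have h01 : -X 2 0 + X 3 1 = 0 := by simpa using entry 0 1
  have h02 : X 1 0 + X 3 2 = 0 := by simpa using entry 0 2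
  have h03 : X 0 0 + X 3 3 = 0 := by simpa using entry 0 3
  have h12 : X 1 1 + X 2 2 = 0 := by simpa using entry 1 2
  have h13 : X 0 1 + X 2 3 = 0 := by simpa using entry 1 3
  have h23 : X 0 2 + -X 1 3 = 0 := by simpa using entry 2 3
  ext i j
  fin_cases i <;> fin_cases j <;> simp [Emat] <;> linarith

/-- The coordinates `(f¹(X), …, f¹⁰(X))` of an element of `sp(2,ℝ)`, read off from its matrix
entries. -/
def fCoord : sp2 ≃ₗ[ℝ] (Fin 10 → ℝ) where
  toFun X := ![-(X.1 3 0) / 2, X.1 2 1, -(X.1 1 0), (X.1 1 1 - X.1 0 0) / 2, X.1 0 1, X.1 1 2,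
    X.1 0 3 / 2, X.1 2 0, (X.1 0 0 + X.1 1 1) / 2, X.1 0 2]
  invFun c := ⟨Emat ![c 0, c 7, c 1, c 2, c 8 - c 3, c 8 + c 3, c 4, c 5, c 9, c 6], Emat_rel _⟩
  map_add' X Y := by
    ext i
    fin_cases i <;> simp <;> ring
  map_smul' r X := by
    ext i
    fin_cases i <;> simp <;> ring
  left_inv X := by
    refine Subtype.ext (.trans (congrArg Emat ?_) (Emat_entries_of_mem_sp2 X.2))
    ext i
    fin_cases i <;> simp <;> ring
  right_inv c := by
    ext i
    fin_cases i <;> simp [Emat]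

lemma fCoord_Esp (k : Fin 10) :
    letI a : Fin 10 → ℝ := Pi.single k 1
    fCoord (Esp k) =
      ![a 0, a 2, a 3, (a 5 - a 4) / 2, a 6, a 7, a 9, a 1, (a 4 + a 5) / 2, a 8] := by
  ext i
  fin_cases i <;> simp [fCoord, Esp, E, Emat]

lemma fCoord_fSp (j : Fin 10) : fCoord (fSp j) = Pi.single j 1 := by
  fin_cases j <;> ext i <;> fin_cases i <;> simp [fSp, fCoord_Esp] <;> norm_num

/-- The frame `(f_I)` as a basis of `sp(2,ℝ)`; its coordinate functions are the dual basis
`(f^I)`. -/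
def fBasis : Module.Basis (Fin 10) ℝ sp2 := Module.Basis.ofEquivFun fCoord

lemma fBasis_apply (j : Fin 10) : fBasis j = fSp j := by
  rw [fBasis, Module.Basis.coe_ofEquivFun, LinearEquiv.symm_apply_eq, fCoord_fSp]

lemma fBasis_repr_apply (X : sp2) (i : Fin 10) : fBasis.repr X i = fCoord X i := rfl

lemma eq_fBasis_coord {ε : Fin 10 → (sp2 →ₗ[ℝ] ℝ)}
    (hdual : ∀ i j, ε i (fSp j) = if i = j then 1 else 0) : ε = fBasis.coord := by
  funext i
  refine fBasis.ext fun j ↦ ?_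
  rw [Module.Basis.coord_apply, fBasis_repr_apply, fBasis_apply, hdual, fCoord_fSp, Pi.single_apply]

lemma fCoord_lie_fSp_seven (X : sp2) :
    fCoord ⁅fSp 7, X⁆ = ![fCoord X 2, 2 * fCoord X 4, fCoord X 5, 0, -2 * fCoord X 6, 0, 0,
      2 * fCoord X 8, -fCoord X 9, 0] := by
  obtain ⟨c, rfl⟩ := fCoord.symm.surjective X
  rw [LinearEquiv.apply_symm_apply]
  ext i
  fin_cases i <;> simp [fCoord, fSp, Esp, E, Emat, Ring.lie_def] <;> ring

/-- The eigenvalues of `ad f₉` on the frame `(f_I)`. -/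
def fWeight : Fin 10 → ℝ := ![-2, -2, 0, 0, 0, 2, 2, -2, 0, 2]

lemma fCoord_lie_fSp_eight (X : sp2) : fCoord ⁅fSp 8, X⁆ = fWeight * fCoord X := by
  obtain ⟨c, rfl⟩ := fCoord.symm.surjective X
  rw [LinearEquiv.apply_symm_apply]
  ext i
  fin_cases i <;> simp [fCoord, fSp, Esp, E, Emat, Ring.lie_def, fWeight] <;> ring

lemma fCoord_lie_fSp_nine (X : sp2) :
    fCoord ⁅fSp 9, X⁆ = ![0, 0, 2 * fCoord X 0, 0, fCoord X 1, 2 * fCoord X 2, -fCoord X 4, 0,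
      fCoord X 7, -2 * fCoord X 8] := by
  obtain ⟨c, rfl⟩ := fCoord.symm.surjective X
  rw [LinearEquiv.apply_symm_apply]
  ext i
  fin_cases i <;> simp [fCoord, fSp, Esp, E, Emat, Ring.lie_def] <;> ring

lemma lie_fSp_eight (j : Fin 10) : ⁅fSp 8, fSp j⁆ = fWeight j • fSp j := by
  apply fCoord.injective
  rw [fCoord_lie_fSp_eight, map_smul, fCoord_fSp]
  ext i
  by_cases h : i = j <;> simp [h]

lemma lie_fSp_nine (j : Fin 10) :
    ⁅fSp 9, fSp j⁆ = ![(2 : ℝ) • fSp 2, fSp 4, (2 : ℝ) • fSp 5, 0, -fSp 6, 0, 0, fSp 8,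
      (-2 : ℝ) • fSp 9, 0] j := by
  apply fCoord.injective
  rw [fCoord_lie_fSp_nine, fCoord_fSp]
  fin_cases j <;> ext i <;> fin_cases i <;> simp [fCoord_fSp]

/-- The subalgebra `sl(2,ℝ)_s`, spanned by `f₈, f₉, f₁₀`, as a subspace of `sp(2,ℝ)`. -/
def sl2s : Submodule ℝ sp2 := spanS.comap sp2.toSubmodule.subtype

lemma sl2s_eq_span : sl2s = Submodule.span ℝ {fSp 7, fSp 8, fSp 9} := by
  have hspanS : spanS = (Submodule.span ℝ {fSp 7, fSp 8, fSp 9}).map sp2.toSubmodule.subtype := by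
    rw [Submodule.map_span, Set.image_insert_eq, Set.image_pair]
    rfl
  rw [sl2s, hspanS, Submodule.comap_map_eq_of_injective sp2.toSubmodule.injective_subtype]

lemma fSp_mem_sl2s {k : Fin 10} (hk : 7 ≤ k) : fSp k ∈ sl2s := by
  rw [sl2s_eq_span]
  apply Submodule.subset_span
  fin_cases k <;> simp_all

/-- The symmetric bilinear forms with coefficients `g₃₃`, `g₄₄`, `g₅₅` and `g₂₆`, in this order, in
the general basic form; the factor `2` in front of `g₂₆` belongs to the form. -/
def quadForm : Fin 4 → (sp2 →ₗ[ℝ] sp2 →ₗ[ℝ] ℝ) :=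
  let f := fBasis.coord
  ![sprodForm (f 2) (f 2) - (2 : ℝ) • sprodForm (f 0) (f 5),
    sprodForm (f 3) (f 3),
    sprodForm (f 4) (f 4) + (2 : ℝ) • sprodForm (f 1) (f 6),
    (2 : ℝ) • ((-2 : ℝ) • sprodForm (f 2) (f 4) + sprodForm (f 1) (f 5) -
      (4 : ℝ) • sprodForm (f 0) (f 6))]

lemma quadForm_mem_basicForms (k : Fin 4) : quadForm k ∈ basicForms sl2s := by
  rw [sl2s_eq_span]
  refine mem_basicForms_span (fun X Y ↦ ?_) ?_ ?_
  · fin_cases k <;> simp [quadForm, sprodForm_apply, sprod] <;> ring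
  · rintro X (rfl | rfl | rfl) Y <;> fin_cases k <;>
      simp [quadForm, sprodForm_apply, sprod, fBasis_repr_apply, fCoord_fSp]
  · rintro Z (rfl | rfl | rfl) X Y <;> fin_cases k <;>
      simp [quadForm, sprodForm_apply, sprod, fBasis_repr_apply, fCoord_lie_fSp_seven,
        fCoord_lie_fSp_eight, fCoord_lie_fSp_nine, fWeight] <;> ring

/-- The components `g₃₃, g₄₄, g₅₅, g₂₆` of a bilinear form in the frame `(f_I)`. -/
def freeComponents : (sp2 →ₗ[ℝ] sp2 →ₗ[ℝ] ℝ) →ₗ[ℝ] (Fin 4 → ℝ) where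
  toFun B := ![B (fSp 2) (fSp 2), B (fSp 3) (fSp 3), B (fSp 4) (fSp 4), B (fSp 1) (fSp 5)]
  map_add' B C := by simp
  map_smul' c B := by simp

lemma freeComponents_quadForm (k : Fin 4) : freeComponents (quadForm k) = Pi.single k 1 := by
  fin_cases k <;> ext i <;> fin_cases i <;>
    simp [freeComponents, quadForm, sprodForm_apply, sprod, fBasis_repr_apply, fCoord_fSp]

section Uniqueness

variable {B : sp2 →ₗ[ℝ] sp2 →ₗ[ℝ] ℝ}

lemma apply_fSp_eq_zero_of_fWeight_add_ne_zero (hB : B ∈ basicForms sl2s) {i j : Fin 10}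
    (hij : fWeight i + fWeight j ≠ 0) : B (fSp i) (fSp j) = 0 :=
  apply_eq_zero_of_weight_add_ne_zero (hB.2.2 _ _ _ (fSp_mem_sl2s (k := 8) (by decide)))
    (lie_fSp_eight i) (lie_fSp_eight j) hij

lemma frame_relations_of_mem_basicForms (hB : B ∈ basicForms sl2s) :
    B (fSp 2) (fSp 3) = 0 ∧ B (fSp 3) (fSp 4) = 0 ∧
    B (fSp 2) (fSp 4) = -2 * B (fSp 1) (fSp 5) ∧ B (fSp 0) (fSp 5) = -B (fSp 2) (fSp 2) ∧
    B (fSp 0) (fSp 6) = -4 * B (fSp 1) (fSp 5) ∧ B (fSp 1) (fSp 6) = B (fSp 4) (fSp 4) := by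
  have invariant (i j : Fin 10) : B ⁅fSp 9, fSp i⁆ (fSp j) + B (fSp i) ⁅fSp 9, fSp j⁆ = 0 :=
    hB.2.2 _ _ _ (fSp_mem_sl2s (by decide))
  have h23 : B (fSp 2) (fSp 3) = 0 := by simpa [lie_fSp_nine] using invariant 0 3
  have h43 : B (fSp 4) (fSp 3) = 0 := by simpa [lie_fSp_nine] using invariant 1 3
  have h42 : B (fSp 4) (fSp 2) + 2 * B (fSp 1) (fSp 5) = 0 := by
    simpa [lie_fSp_nine] using invariant 1 2
  have h05 : 2 * B (fSp 2) (fSp 2) + 2 * B (fSp 0) (fSp 5) = 0 := by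
    simpa [lie_fSp_nine] using invariant 0 2
  have h06 : 2 * B (fSp 2) (fSp 4) + -B (fSp 0) (fSp 6) = 0 := by
    simpa [lie_fSp_nine] using invariant 0 4
  have h16 : B (fSp 4) (fSp 4) + -B (fSp 1) (fSp 6) = 0 := by
    simpa [lie_fSp_nine] using invariant 1 4
  rw [hB.1] at h43 h42
  refine ⟨h23, h43, ?_, ?_, ?_, ?_⟩ <;> linarith

lemma horizontal_pair_of_fWeight_add_eq_zero {i j : Fin 10} (hij : i ≤ j) (hj : ¬ 7 ≤ j)
    (hw : fWeight i + fWeight j = 0) :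
    i = 0 ∧ j = 5 ∨ i = 0 ∧ j = 6 ∨ i = 1 ∧ j = 5 ∨ i = 1 ∧ j = 6 ∨ i = 2 ∧ j = 2 ∨
      i = 2 ∧ j = 3 ∨ i = 2 ∧ j = 4 ∨ i = 3 ∧ j = 3 ∨ i = 3 ∧ j = 4 ∨ i = 4 ∧ j = 4 := by
  fin_cases j <;> first
    | exact absurd (by decide) hj
    | fin_cases i <;> first
      | exact absurd hij (by decide)
      | decide
      | norm_num [fWeight] at hw

lemma freeComponents_injOn : Set.InjOn freeComponents {B | B ∈ basicForms sl2s} := by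
  intro B hB C hC h
  have h22 : B (fSp 2) (fSp 2) = C (fSp 2) (fSp 2) := congrFun h 0
  have h33 : B (fSp 3) (fSp 3) = C (fSp 3) (fSp 3) := congrFun h 1
  have h44 : B (fSp 4) (fSp 4) = C (fSp 4) (fSp 4) := congrFun h 2
  have h15 : B (fSp 1) (fSp 5) = C (fSp 1) (fSp 5) := congrFun h 3
  obtain ⟨B23, B34, B24, B05, B06, B16⟩ := frame_relations_of_mem_basicForms hB
  obtain ⟨C23, C34, C24, C05, C06, C16⟩ := frame_relations_of_mem_basicForms hC
  have upper (i j : Fin 10) (hij : i ≤ j) : B (fSp i) (fSp j) = C (fSp i) (fSp j) := by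
    by_cases hj : 7 ≤ j
    · rw [hB.1, hC.1, hB.2.1 _ _ (fSp_mem_sl2s hj), hC.2.1 _ _ (fSp_mem_sl2s hj)]
    by_cases hw : fWeight i + fWeight j = 0
    · rcases horizontal_pair_of_fWeight_add_eq_zero hij hj hw with
        ⟨rfl, rfl⟩ | ⟨rfl, rfl⟩ | ⟨rfl, rfl⟩ | ⟨rfl, rfl⟩ | ⟨rfl, rfl⟩ | ⟨rfl, rfl⟩ | ⟨rfl, rfl⟩ |
        ⟨rfl, rfl⟩ | ⟨rfl, rfl⟩ | ⟨rfl, rfl⟩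
      · rw [B05, C05, h22]
      · rw [B06, C06, h15]
      · exact h15
      · rw [B16, C16, h44]
      · exact h22
      · rw [B23, C23]
      · rw [B24, C24, h15]
      · exact h33
      · rw [B34, C34]
      · exact h44
    · rw [apply_fSp_eq_zero_of_fWeight_add_ne_zero hB hw,
        apply_fSp_eq_zero_of_fWeight_add_ne_zero hC hw]
  refine fBasis.ext fun i ↦ fBasis.ext fun j ↦ ?_
  rw [fBasis_apply, fBasis_apply]
  rcases le_total i j with hij | hji
  · exact upper i j hij
  · rw [hB.1, hC.1, upper j i hji]

lemma sum_smul_quadForm_mem_basicForms (g : Fin 4 → ℝ) :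
    ∑ k, g k • quadForm k ∈ basicForms sl2s :=
  sum_mem fun k _ ↦ Submodule.smul_mem _ _ (quadForm_mem_basicForms k)

lemma sum_freeComponents_smul_quadForm (hB : B ∈ basicForms sl2s) :
    ∑ k, freeComponents B k • quadForm k = B := by
  refine freeComponents_injOn (sum_smul_quadForm_mem_basicForms _) hB ?_
  simp only [map_sum, map_smul, freeComponents_quadForm]
  exact (pi_eq_sum_univ' _).symm

end Uniqueness

lemma basicForms_sl2s_eq_span : basicForms sl2s = Submodule.span ℝ (Set.range quadForm) := by
  refine le_antisymm (fun B hB ↦ ?_) (Submodule.span_le.mpr ?_)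
  · exact Submodule.mem_span_range_iff_exists_fun ℝ |>.mpr
      ⟨freeComponents B, sum_freeComponents_smul_quadForm hB⟩
  · exact Set.range_subset_iff.mpr quadForm_mem_basicForms

lemma linearIndependent_quadForm : LinearIndependent ℝ quadForm := by
  refine .of_comp freeComponents ?_
  convert (Pi.basisFun ℝ (Fin 4)).linearIndependent using 1
  ext1 k
  rw [Function.comp_apply, freeComponents_quadForm, Pi.basisFun_apply]

lemma finrank_basicForms_sl2s : Module.finrank ℝ (basicForms (R := ℝ) sl2s) = 4 := by
  rw [basicForms_sl2s_eq_span, finrank_span_eq_card linearIndependent_quadForm, Fintype.card_fin]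

lemma sum_smul_quadForm_apply (g : Fin 4 → ℝ) (X Y : sp2) :
    (∑ k, g k • quadForm k) X Y =
      g 0 * (sprod (fBasis.coord 2) (fBasis.coord 2) X Y -
        2 * sprod (fBasis.coord 0) (fBasis.coord 5) X Y) +
      g 1 * sprod (fBasis.coord 3) (fBasis.coord 3) X Y +
      g 2 * (sprod (fBasis.coord 4) (fBasis.coord 4) X Y +
        2 * sprod (fBasis.coord 1) (fBasis.coord 6) X Y) +
      2 * g 3 * (-2 * sprod (fBasis.coord 2) (fBasis.coord 4) X Y +
        sprod (fBasis.coord 1) (fBasis.coord 5) X Y -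
        4 * sprod (fBasis.coord 0) (fBasis.coord 6) X Y) := by
  simp only [quadForm, Fin.sum_univ_four, cons_val_zero, cons_val_one, cons_val, smul_eq_mul,
    LinearMap.add_apply, LinearMap.sub_apply, LinearMap.smul_apply, sprodForm_apply]
  ring

theorem statement16 (ε : Fin 10 → (sp2 →ₗ[ℝ] ℝ))
    (hdual : ∀ i j : Fin 10, ε i (fSp j) = if i = j then 1 else 0) :
    -- the equivalence, for any symmetric bilinear form B on 𝔤
    (∀ B : sp2 →ₗ[ℝ] sp2 →ₗ[ℝ] ℝ, (∀ x y : sp2, B x y = B y x) →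
      (((∀ x y : sp2, (x : Matrix (Fin 4) (Fin 4) ℝ) ∈ spanS → B x y = 0) ∧
        (∀ z x y : sp2, (z : Matrix (Fin 4) (Fin 4) ℝ) ∈ spanS →
          B ⁅z, x⁆ y + B x ⁅z, y⁆ = 0)) ↔
        (∃ g33 g44 g55 g26 : ℝ, ∀ X Y : sp2,
          B X Y =
            g33 * (sprod (ε 2) (ε 2) X Y - 2 * sprod (ε 0) (ε 5) X Y) +
            g44 * sprod (ε 3) (ε 3) X Y +
            g55 * (sprod (ε 4) (ε 4) X Y + 2 * sprod (ε 1) (ε 6) X Y) +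
            2 * g26 * (-2 * sprod (ε 2) (ε 4) X Y + sprod (ε 1) (ε 5) X Y -
              4 * sprod (ε 0) (ε 6) X Y)))) ∧
    -- the space of such forms is 4-dimensional
    (∃ W : Submodule ℝ (sp2 →ₗ[ℝ] sp2 →ₗ[ℝ] ℝ),
      (W : Set (sp2 →ₗ[ℝ] sp2 →ₗ[ℝ] ℝ)) =
        {B | (∀ x y : sp2, B x y = B y x) ∧
          (∀ x y : sp2, (x : Matrix (Fin 4) (Fin 4) ℝ) ∈ spanS → B x y = 0) ∧
          (∀ z x y : sp2, (z : Matrix (Fin 4) (Fin 4) ℝ) ∈ spanS →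
            B ⁅z, x⁆ y + B x ⁅z, y⁆ = 0)} ∧
      Module.finrank ℝ W = 4) := by
  obtain rfl := eq_fBasis_coord hdual
  refine ⟨fun B symm ↦ ⟨fun h ↦ ?_, ?_⟩, basicForms sl2s, rfl, finrank_basicForms_sl2s⟩
  · have hB : B ∈ basicForms sl2s := ⟨symm, h⟩
    refine ⟨freeComponents B 0, freeComponents B 1, freeComponents B 2, freeComponents B 3,
      fun X Y ↦ ?_⟩
    rw [← sum_smul_quadForm_apply, sum_freeComponents_smul_quadForm hB]
  · rintro ⟨g33, g44, g55, g26, h⟩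
    have hB : B = ∑ k, ![g33, g44, g55, g26] k • quadForm k := by
      ext X Y : 2
      exact (h X Y).trans (sum_smul_quadForm_apply ![g33, g44, g55, g26] X Y).symm
    exact (hB ▸ sum_smul_quadForm_mem_basicForms _ : B ∈ basicForms sl2s).2
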